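/- Let A ∈ ℝ^{N×N}, B ∈ ℝ^{N×M}, K ∈ ℝ^{M×N}, A_h ∈ ℝ^{n×n}, B_h ∈ ℝ^{n×m}, C_h ∈ ℝ^{m×n}. Suppose that for every complex eigenvalue λ of A − B K, every complex eigenvalue of A_h + λ·(B_h C_h) has negative real part. Then every complex eigenvalue of the matrix (I_N ⊗ A_h + A ⊗ (B_h C_h)) − (B ⊗ B_h)(K ⊗ C_h) has negative real part. -/

import Mathlib

open Matrix Kronecker

/-!
Write `F = A - B K` and `G = B_h C_h`. By the mixed-product rule the closed-loop matrix is
`S = 1 ⊗ A_h + F ⊗ G`, which commutes with `T = F ⊗ 1`. Over `ℂ`, each eigenspace of `S` is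
therefore `T`-invariant, so any eigenvalue `μ` of `S` has an eigenvector `v` with also `T v = l v`
for some `l`. On `v` the factor `F ⊗ G = (1 ⊗ G) T` acts as `l (1 ⊗ G)`, whence
`(1 ⊗ (A_h + l G)) v = μ v`. Thus `l` is an eigenvalue of `F` and `μ` one of `A_h + l G`.
-/

open Module.End in
/-- An eigenvalue of `S` has an eigenvector shared with any matrix `T` commuting with `S`:
restrict `T` to the eigenspace of `S`. -/
theorem exists_common_eigenvector {ι : Type*} [Fintype ι] [DecidableEq ι]
    {S T : Matrix ι ι ℂ} (hST : Commute S T) {μ : ℂ} (hμ : μ ∈ spectrum ℂ S) :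
    ∃ (l : ℂ) (v : ι → ℂ), v ≠ 0 ∧ S *ᵥ v = μ • v ∧ T *ᵥ v = l • v := by
  rw [← Matrix.spectrum_toLin', ← hasEigenvalue_iff_mem_spectrum] at hμ
  have hinv : ∀ x ∈ eigenspace (Matrix.toLin' S) μ,
      Matrix.toLin' T x ∈ eigenspace (Matrix.toLin' S) μ := by
    intro x hx
    rw [mem_eigenspace_iff, Matrix.toLin'_apply] at hx ⊢
    rw [Matrix.toLin'_apply, Matrix.mulVec_mulVec, hST.eq, ← Matrix.mulVec_mulVec, hx,
      Matrix.mulVec_smul]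
  have : Nontrivial (eigenspace (Matrix.toLin' S) μ) :=
    Submodule.nontrivial_iff_ne_bot.mpr hμ
  obtain ⟨l, hl⟩ := exists_eigenvalue ((Matrix.toLin' T).restrict hinv)
  obtain ⟨v, hv⟩ := hl.exists_hasEigenvector
  refine ⟨l, v, fun h0 => hv.2 (Subtype.ext h0), ?_, ?_⟩
  · simpa using mem_eigenspace_iff.mp v.2
  · simpa using congrArg Subtype.val hv.apply_eq_smul

/-- A nonzero solution of `X v = μ v` places `μ` in the spectrum of `X`. -/
theorem mem_spectrum_of_mulVec {ι : Type*} [Fintype ι] [DecidableEq ι]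
    {X : Matrix ι ι ℂ} {μ : ℂ} {v : ι → ℂ} (hv : v ≠ 0) (h : X *ᵥ v = μ • v) :
    μ ∈ spectrum ℂ X := by
  rw [← Matrix.spectrum_toLin', ← Module.End.hasEigenvalue_iff_mem_spectrum]
  exact Module.End.hasEigenvalue_of_hasEigenvector
    ⟨Module.End.mem_eigenspace_iff.mpr (by simpa using h), hv⟩

theorem sub_kron {R a b c d : Type*} [CommRing R] (X Y : Matrix a b R) (Z : Matrix c d R) :
    (X - Y) ⊗ₖ Z = X ⊗ₖ Z - Y ⊗ₖ Z := by
  ext; simp [sub_mul]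

theorem kron_sub {R a b c d : Type*} [CommRing R] (X : Matrix a b R) (Y Z : Matrix c d R) :
    X ⊗ₖ (Y - Z) = X ⊗ₖ Y - X ⊗ₖ Z := by
  ext; simp [mul_sub]

theorem mem_spectrum_of_kronecker_one {ι κ : Type*} [Fintype ι] [DecidableEq ι]
    [Fintype κ] [DecidableEq κ] {X : Matrix ι ι ℂ} {μ : ℂ}
    (h : μ ∈ spectrum ℂ (X ⊗ₖ (1 : Matrix κ κ ℂ))) : μ ∈ spectrum ℂ X := by
  rw [spectrum.mem_iff] at h ⊢
  contrapose! h
  have e : algebraMap ℂ (Matrix (ι × κ) (ι × κ) ℂ) μ - X ⊗ₖ (1 : Matrix κ κ ℂ)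
      = (algebraMap ℂ (Matrix ι ι ℂ) μ - X) ⊗ₖ (1 : Matrix κ κ ℂ) := by
    simp only [Algebra.algebraMap_eq_smul_one, sub_kron, Matrix.smul_kronecker,
      Matrix.one_kronecker_one]
  rw [Matrix.isUnit_iff_isUnit_det] at h
  rw [e, Matrix.isUnit_iff_isUnit_det, Matrix.det_kronecker]
  simpa using h.pow _

theorem mem_spectrum_of_one_kronecker {ι κ : Type*} [Fintype ι] [DecidableEq ι]
    [Fintype κ] [DecidableEq κ] {X : Matrix κ κ ℂ} {μ : ℂ}
    (h : μ ∈ spectrum ℂ ((1 : Matrix ι ι ℂ) ⊗ₖ X)) : μ ∈ spectrum ℂ X := by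
  rw [spectrum.mem_iff] at h ⊢
  contrapose! h
  have e : algebraMap ℂ (Matrix (ι × κ) (ι × κ) ℂ) μ - (1 : Matrix ι ι ℂ) ⊗ₖ X
      = (1 : Matrix ι ι ℂ) ⊗ₖ (algebraMap ℂ (Matrix κ κ ℂ) μ - X) := by
    simp only [Algebra.algebraMap_eq_smul_one, kron_sub, Matrix.kronecker_smul,
      Matrix.one_kronecker_one]
  rw [Matrix.isUnit_iff_isUnit_det] at h
  rw [e, Matrix.isUnit_iff_isUnit_det, Matrix.det_kronecker]
  simpa using h.pow _

/-- if every eigenvalue `λ` of `A − B K` is such that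
`A_h + λ • (B_h C_h)` is Hurwitz, then the closed-loop matrix
`(I_N ⊗ A_h + A ⊗ (B_h C_h)) − (B ⊗ B_h)(K ⊗ C_h)` is Hurwitz. -/
theorem stmt_5 (N M n m : ℕ)
    (A : Matrix (Fin N) (Fin N) ℝ)
    (B : Matrix (Fin N) (Fin M) ℝ)
    (K : Matrix (Fin M) (Fin N) ℝ)
    (Ah : Matrix (Fin n) (Fin n) ℝ)
    (Bh : Matrix (Fin n) (Fin m) ℝ)
    (Ch : Matrix (Fin m) (Fin n) ℝ)
    (h : ∀ l ∈ spectrum ℂ ((A - B * K).map Complex.ofReal),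
        ∀ μ ∈ spectrum ℂ (Ah.map Complex.ofReal + l • (Bh * Ch).map Complex.ofReal),
          μ.re < 0) :
    ∀ μ ∈ spectrum ℂ
        ((((1 : Matrix (Fin N) (Fin N) ℝ) ⊗ₖ Ah + A ⊗ₖ (Bh * Ch))
            - (B ⊗ₖ Bh) * (K ⊗ₖ Ch)).map Complex.ofReal),
      μ.re < 0 := by
  intro μ hμ
  set F := (A - B * K).map Complex.ofReal with hF
  set P := Ah.map Complex.ofReal with hP
  set G := (Bh * Ch).map Complex.ofReal with hG
  have hS : (((1 : Matrix (Fin N) (Fin N) ℝ) ⊗ₖ Ah + A ⊗ₖ (Bh * Ch))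
      - (B ⊗ₖ Bh) * (K ⊗ₖ Ch)).map Complex.ofReal
      = (1 : Matrix (Fin N) (Fin N) ℂ) ⊗ₖ P + F ⊗ₖ G := by
    rw [← Matrix.mul_kronecker_mul, add_sub_assoc, ← sub_kron]
    ext ⟨i, j⟩ ⟨i', j'⟩
    rcases eq_or_ne i i' with rfl | hne
    · simp [hF, hP, hG]
    · simp [hF, hP, hG, hne]
  rw [hS] at hμ
  have hcomm : Commute ((1 : Matrix (Fin N) (Fin N) ℂ) ⊗ₖ P + F ⊗ₖ G)
      (F ⊗ₖ (1 : Matrix (Fin n) (Fin n) ℂ)) := by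
    simp [Commute, SemiconjBy, add_mul, mul_add, ← Matrix.mul_kronecker_mul]
  obtain ⟨l, v, hv, hSv, hTv⟩ := exists_common_eigenvector hcomm hμ
  refine h l (mem_spectrum_of_kronecker_one (mem_spectrum_of_mulVec hv hTv)) μ
    (mem_spectrum_of_one_kronecker (ι := Fin N) (mem_spectrum_of_mulVec hv ?_))
  have hFG : F ⊗ₖ G = ((1 : Matrix (Fin N) (Fin N) ℂ) ⊗ₖ G) *
      (F ⊗ₖ (1 : Matrix (Fin n) (Fin n) ℂ)) := by
    simp [← Matrix.mul_kronecker_mul]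
  rw [← hSv, hFG, Matrix.add_mulVec, ← Matrix.mulVec_mulVec, hTv, Matrix.mulVec_smul,
    Matrix.kronecker_add, Matrix.kronecker_smul, Matrix.add_mulVec, Matrix.smul_mulVec]
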